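/- arXiv:1408.2095 — 9 statements merged into one kernel-verified Lean document; each statement's English description precedes it below -/
import Mathlib

section
/- Let F be a finite field with q elements and let i be a positive integer coprime to q. Let k be the multiplicative order of q modulo i (the order of the unit (q : ZMod i) in (ZMod i)ˣ). Then the i-th cyclotomic polynomial over F is squarefree and factors as a product of exactly φ(i)/k pairwise distinct monic irreducible polynomials, each of degree k, where φ is Euler's totient function. -/
open Polynomial UniqueFactorizationMonoid

/-- Let `F` be a finite field with `q` elements and `i` a positive integer coprime to `q`.
Let `k` be the multiplicative order of `q` modulo `i`. Then the `i`-th cyclotomic polynomial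
over `F` is squarefree and is the product of exactly `φ(i)/k` pairwise distinct monic
irreducible polynomials, each of degree `k`. -/
theorem stmt_1 (F : Type*) [Field F] [Fintype F] (q i : ℕ) (hF : Fintype.card F = q)
    (hi : 0 < i) (hcop : Nat.Coprime q i)
    (k : ℕ) (hk : k = orderOf (ZMod.unitOfCoprime q hcop : (ZMod i)ˣ)) :
    Squarefree (Polynomial.cyclotomic i F) ∧
      ∃ s : Finset (Polynomial F), s.card = Nat.totient i / k ∧
        (∀ P ∈ s, P.Monic ∧ Irreducible P ∧ P.natDegree = k) ∧
        Polynomial.cyclotomic i F = ∏ P ∈ s, P := by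
  classical
  obtain ⟨p, hchar⟩ := CharP.exists F
  obtain ⟨f, hp, hcard⟩ := FiniteField.card F p
  have : Fact p.Prime := ⟨hp⟩
  obtain rfl : q = p ^ (f : ℕ) := hF.symm.trans hcard
  have hpi : p.Coprime i := (Nat.coprime_pow_left_iff f.pos p i).mp hcop
  have : NeZero (i : F) :=
    ⟨fun h ↦ hp.coprime_iff_not_dvd.mp hpi ((CharP.cast_eq_zero_iff F p i).mp h)⟩
  have hsq := squarefree_cyclotomic i F
  have h0 := cyclotomic_ne_zero i F
  refine ⟨hsq, (normalizedFactors (cyclotomic i F)).toFinset, ?_, fun P hP ↦ ?_, ?_⟩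
  · rw [hk, normalizedFactors_cyclotomic_card hcard hpi]
  · rw [Multiset.mem_toFinset] at hP
    obtain ⟨hirr, hmonic, -⟩ := (Polynomial.mem_normalizedFactors_iff h0).mp hP
    exact ⟨hmonic, hirr, hk ▸ natDegree_of_mem_normalizedFactors_cyclotomic hcard hpi hP⟩
  · have hnodup := (squarefree_iff_nodup_normalizedFactors h0).mp hsq
    rw [Finset.prod, Multiset.toFinset_val, hnodup.dedup, Multiset.map_id',
      prod_normalizedFactors_eq h0,
      (cyclotomic.monic i F).normalize_eq_self]
end

section
/- Let K be a field, let m be a natural number, and let σ be a permutation of Fin m. Then the characteristic polynomial of the m × m permutation matrix of σ over K equals (X − 1)^(m − s) · ∏_{c ∈ cycleType σ} (X^c − 1), where s is the cardinality of the support of σ (the set of points moved by σ) and cycleType σ is the multiset of lengths (each ≥ 2) of the nontrivial cycles of σ. -/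
open Equiv in
theorem Equiv.Perm.permMatrix_apply_eq_ite {n R : Type*} [DecidableEq n] [Zero R] [One R]
    (σ : Perm n) (i j : n) : σ.permMatrix R i j = if σ i = j then 1 else 0 := by
  simp [PEquiv.toMatrix_apply, eq_comm]

open Equiv in
/-- The permutation matrices of disjoint permutations satisfy `P_σ + P_τ = 1 + P_{στ}`. -/
theorem Equiv.Perm.Disjoint.permMatrix_add {n R : Type*} [DecidableEq n]
    [NonAssocSemiring R] {σ τ : Perm n} (h : σ.Disjoint τ) :
    σ.permMatrix R + τ.permMatrix R = 1 + (σ * τ).permMatrix R := by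
  ext i j
  simp only [Matrix.add_apply, Perm.permMatrix_apply_eq_ite, Matrix.one_apply,
    Perm.mul_apply]
  rcases h i with hi | hi
  · have hστ : σ (τ i) = τ i := by
      rw [← Perm.mul_apply, h.commute.eq, Perm.mul_apply, hi]
    simp [hi, hστ]
  · simp [hi, add_comm]

open Polynomial Equiv in
theorem Equiv.Perm.Disjoint.charpoly_permMatrix_mul {n R : Type*} [Fintype n] [DecidableEq n]
    [CommRing R] {σ τ : Perm n} (h : σ.Disjoint τ) :
    (X - 1) ^ Fintype.card n * ((σ * τ).permMatrix R).charpoly =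
      (σ.permMatrix R).charpoly * (τ.permMatrix R).charpoly := by
  have hadd := congrArg (C : R →+* R[X]).mapMatrix (h.permMatrix_add (R := R))
  have hmul := congrArg (C : R →+* R[X]).mapMatrix (Matrix.permMatrix_mul (R := R) τ σ)
  rw [← h.commute.eq] at hmul
  rw [map_add, map_add, map_one] at hadd
  rw [map_mul] at hmul
  simp only [Matrix.charpoly, Matrix.charmatrix]
  rw [← Matrix.det_mul, ← Matrix.det_smul]
  congr 1
  simp only [Matrix.scalar_apply, ← Matrix.smul_one_eq_diagonal]
  generalize (C : R →+* R[X]).mapMatrix (σ.permMatrix R) = A at *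
  generalize (C : R →+* R[X]).mapMatrix (τ.permMatrix R) = B at *
  generalize (C : R →+* R[X]).mapMatrix ((σ * τ).permMatrix R) = D at *
  have hB : B = 1 + D - A := by rw [← hadd]; abel
  simp only [sub_mul, mul_sub, smul_mul_assoc, mul_smul_comm, one_mul, mul_one, ← hmul]
  rw [hB]
  module

open Equiv in
/-- A permutation which agrees pointwise with either the identity or a given cycle is one of
the two. -/
theorem Equiv.Perm.IsCycle.eq_one_or_eq_of_forall {n : Type*} [Finite n] {σ τ : Perm n}
    (hσ : σ.IsCycle) (h : ∀ i, τ i = i ∨ τ i = σ i) : τ = 1 ∨ τ = σ := by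
  by_cases hτ : ∃ x, τ x ≠ x
  · obtain ⟨x, hx⟩ := hτ
    right
    have hxσ : σ x ≠ x := fun h' => by rcases h x with h1 | h1 <;> simp_all
    have key : ∀ k : ℕ, τ ((σ ^ k) x) ≠ (σ ^ k) x := by
      intro k
      induction k with
      | zero => simpa using hx
      | succ k ih =>
        intro h'
        have h1 := (h ((σ ^ k) x)).resolve_left ih
        rw [pow_succ', Perm.mul_apply, ← h1] at h'
        exact ih (τ.injective h')
    ext y
    by_cases hy : σ y = y
    · rcases h y with h1 | h1 <;> simp [h1, hy]
    · obtain ⟨k, rfl⟩ := (hσ.sameCycle hxσ hy).exists_nat_pow_eq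
      exact (h _).resolve_left (key k)
  · push Not at hτ
    exact Or.inl (Perm.ext hτ)

open Polynomial Equiv in
theorem Equiv.Perm.IsCycle.charpoly_permMatrix {n R : Type*} [Fintype n] [DecidableEq n]
    [CommRing R] {σ : Perm n} (hσ : σ.IsCycle) :
    (σ.permMatrix R).charpoly =
      (X - 1) ^ (Fintype.card n - σ.support.card) * (X ^ σ.support.card - 1) := by
  have entry : ∀ i j, (σ.permMatrix R).charmatrix i j =
      (if i = j then X else 0) - (if σ i = j then 1 else 0) := by
    intro i j
    simp only [Matrix.charmatrix_apply, Matrix.diagonal_apply,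
      Perm.permMatrix_apply_eq_ite]
    split_ifs <;> simp
  have prod_split : ∀ a b : R[X], (∏ i, if σ i = i then a else b) =
      a ^ (Fintype.card n - σ.support.card) * b ^ σ.support.card := by
    intro a b
    rw [Finset.prod_ite, Finset.prod_const, Finset.prod_const, ← Finset.card_compl]
    congr 3
    ext; simp
  rw [Matrix.charpoly, ← Matrix.det_transpose, Matrix.det_apply',
    Finset.sum_eq_add 1 σ hσ.ne_one.symm]
  · have h1 : ∏ i, (σ.permMatrix R).charmatrix.transpose ((1 : Perm n) i) i =
        ∏ i, if σ i = i then X - 1 else X := by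
      refine Finset.prod_congr rfl fun i _ => ?_
      rw [Matrix.transpose_apply, entry, Perm.one_apply, if_pos rfl]
      split_ifs <;> simp
    have h2 : ∏ i, (σ.permMatrix R).charmatrix.transpose (σ i) i =
        ∏ i, if σ i = i then X - 1 else -1 := by
      refine Finset.prod_congr rfl fun i _ => ?_
      rw [Matrix.transpose_apply, entry, if_pos rfl]
      by_cases hi : σ i = i
      · simp [hi]
      · simp [hi, Ne.symm hi]
    rw [h1, h2, prod_split, prod_split, hσ.sign, Perm.sign_one]
    have h3 : ((-1 : R[X]) ^ σ.support.card) * (-1) ^ σ.support.card = 1 := by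
      rw [← mul_pow]; simp
    push_cast
    linear_combination (-(X - 1) ^ (Fintype.card n - σ.support.card)) * h3
  · intro τ _ hτ
    obtain ⟨i, hi⟩ : ∃ i, ¬ (τ i = i ∨ τ i = σ i) := by
      by_contra! h
      rcases hσ.eq_one_or_eq_of_forall h with h | h
      exacts [hτ.1 h, hτ.2 h]
    push Not at hi
    rw [Finset.prod_eq_zero (Finset.mem_univ i), mul_zero]
    rw [Matrix.transpose_apply, entry, if_neg hi.1.symm, if_neg hi.2.symm, sub_zero]
  · simp
  · simp

open Polynomial Equiv in
theorem Equiv.Perm.charpoly_permMatrix {n R : Type*} [Fintype n] [DecidableEq n]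
    [CommRing R] (σ : Perm n) :
    (σ.permMatrix R).charpoly =
      (X - 1) ^ (Fintype.card n - σ.support.card) *
        (σ.cycleType.map fun c => X ^ c - 1).prod := by
  induction σ using Perm.cycle_induction_on with
  | base_one => simp [Matrix.charpoly_one]
  | base_cycles σ hσ => simp [hσ.charpoly_permMatrix, hσ.cycleType]
  | induction_disjoint σ τ h _ ihσ ihτ =>
    have hreg : IsLeftRegular ((X - 1 : R[X]) ^ Fintype.card n) := by
      simpa using ((monic_X_sub_C (1 : R)).pow (Fintype.card n)).isRegular.left
    apply hreg
    have hcard : (σ * τ).support.card ≤ Fintype.card n := Finset.card_le_univ _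
    have hexp : Fintype.card n + (Fintype.card n - (σ * τ).support.card) =
        (Fintype.card n - σ.support.card) + (Fintype.card n - τ.support.card) := by
      rw [h.card_support_mul] at hcard ⊢
      omega
    simp only
    rw [h.charpoly_permMatrix_mul, ihσ, ihτ, ← mul_assoc (_ ^ Fintype.card n), ← pow_add, hexp, pow_add,
      h.cycleType_mul, Multiset.map_add, Multiset.prod_add]
    ring

/-- Over a field `K`, the characteristic polynomial of the `m × m` permutation matrix of a
permutation `σ` of `Fin m` (the matrix whose `(i, j)` entry is `1` if `σ j = i` and `0`
otherwise) equals `(X − 1)^(m − s) · ∏_{c ∈ cycleType σ} (X^c − 1)`, where `s` is the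
cardinality of the support of `σ`. -/
theorem stmt_2 (K : Type*) [Field K] (m : ℕ) (σ : Equiv.Perm (Fin m)) :
    (Matrix.of fun i j : Fin m => if σ j = i then (1 : K) else 0).charpoly =
      (Polynomial.X - 1) ^ (m - σ.support.card) *
        (σ.cycleType.map fun c => Polynomial.X ^ c - 1).prod := by
  have hM : (Matrix.of fun i j : Fin m => if σ j = i then (1 : K) else 0) =
      (σ.permMatrix K).transpose := by
    ext i j
    rw [Matrix.transpose_apply, Equiv.Perm.permMatrix_apply_eq_ite, Matrix.of_apply]
  rw [hM, Matrix.charpoly_transpose, Equiv.Perm.charpoly_permMatrix, Fintype.card_fin]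
end

section
/- Let K be a field (or commutative ring), let m be a positive integer, let σ be the m-cycle on Fin m defined by σ(i) = i + 1 (mod m), and let d : Fin m → K. Let M be the m × m matrix with M i j = d i if j = σ i and M i j = 0 otherwise. Then the characteristic polynomial of M is X^m − ∏_{i} d i. -/
open Polynomial in
/-- Let `K` be a commutative ring, `m` a positive integer, `σ` the `m`-cycle
`i ↦ i + 1 (mod m)` on `Fin m`, and `d : Fin m → K`. The matrix `M` with
`M i j = d i` if `j = σ i` and `0` otherwise has characteristic polynomial
`X^m − ∏ i, d i`. -/
theorem stmt_3 (K : Type*) [CommRing K] (m : ℕ) [NeZero m] (d : Fin m → K) :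
    (Matrix.of fun i j : Fin m => if j = i + 1 then d i else 0).charpoly =
      Polynomial.X ^ m - Polynomial.C (∏ i, d i) := by
  obtain ⟨n, rfl⟩ := Nat.exists_eq_succ_of_ne_zero (NeZero.ne m)
  set A := (Matrix.of fun i j : Fin (n + 1) => if j = i + 1 then d i else 0).charmatrix with hA
  have entry (i j : Fin (n + 1)) :
      A i j = (if i = j then X else 0) - (if j = i + 1 then C (d i) else 0) := by
    simp only [hA, Matrix.charmatrix_apply, Matrix.diagonal_apply, Matrix.of_apply]
    split_ifs <;> simp
  have succ_eq_add_one (i : Fin n) (j : Fin (n + 1)) :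
      j = i.succ + 1 → (j : ℕ) = 0 ∨ (j : ℕ) = i + 2 := by
    rintro rfl
    rw [Fin.val_add_one]
    split_ifs <;> simp
  have zero_eq_add_one (i : Fin (n + 1)) : 0 = i + 1 ↔ i = Fin.last n := by
    rw [Fin.ext_iff, Fin.val_add_one]
    split_ifs with h <;> simp [h]
  have upper : (A.submatrix (Fin.succAbove 0) Fin.succ).det = X ^ n := by
    rw [Matrix.det_of_isUpperTriangular]
    · have diag (i : Fin n) : i.succ ≠ i.succ + 1 := fun h => by
        have := succ_eq_add_one i _ h
        simp at this
      simp [entry, diag]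
    · intro i j (hij : j < i)
      have hne : j.succ ≠ i.succ + 1 := fun h => by
        have := succ_eq_add_one i _ h
        simp only [Fin.val_succ] at this
        omega
      simp [entry, hne, hij.ne']
  have lower : (A.submatrix (Fin.last n).succAbove Fin.succ).det =
      (-1) ^ n * C (∏ i : Fin n, d i.castSucc) := by
    rw [Matrix.det_of_isLowerTriangular]
    · have diag (i : Fin n) : i.castSucc ≠ i.succ := i.castSucc_lt_succ.ne
      simp [entry, diag, Finset.prod_neg, map_prod]
    · intro i j (hij : i < j)
      have hne : i.castSucc ≠ j.succ := fun h => by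
        have := congrArg Fin.val h
        simp only [Fin.val_succ, Fin.val_castSucc] at this
        omega
      simp [entry, hne, hij.ne']
  rw [Matrix.charpoly, ← hA, Matrix.det_succ_column_zero]
  simp only [entry, zero_eq_add_one, mul_sub, sub_mul, Finset.sum_sub_distrib, mul_ite, ite_mul,
    mul_zero, zero_mul, Finset.sum_ite_eq', Finset.mem_univ, if_true]
  rw [upper, lower, Fin.prod_univ_castSucc, C_mul]
  have sign : ((-1 : K[X]) ^ n) * (-1) ^ n = 1 := by rw [← mul_pow]; simp
  simp only [Fin.val_zero, Fin.val_last, pow_zero, one_mul, Nat.succ_eq_add_one]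
  linear_combination (-C (d (Fin.last n)) * C (∏ i : Fin n, d i.castSucc)) * sign
end

section
/- Let K be a field, r ≥ 1 an integer, and f ∈ K[X] a polynomial. Let R₀ = K[x, y]/(y^r − f(x)) and let A be the localization of R₀ away from the image of y, so that y is invertible in A. Let Ω_{A/K} be the module of Kähler differentials of A over K with universal derivation D. Then for all integers i ≥ 1 and j, the identity (j − r) • (x^i · f'(x) · y^{−j} • D(x)) = (r·i) • (x^{i−1} · y^{r−j} • D(x)) − r • D(x^i · y^{r−j}) holds in Ω_{A/K}. In particular, when j − r is invertible in K, the class of x^i f'(x) y^{−j} D(x) modulo exact differentials equals (r·i)/(j − r) times the class of x^{i−1} y^{r−j} D(x). -/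
open Polynomial

theorem Derivation.leibniz_units_zpow {R A M : Type*} [CommRing R] [CommRing A] [Algebra R A]
    [AddCommGroup M] [Module A M] [Module R M] (d : Derivation R A M) (u : Aˣ) (n : ℤ) :
    d ((u ^ n : Aˣ) : A) = n • ((u ^ (n - 1) : Aˣ) : A) • d (u : A) := by
  have succ (m : ℤ) : d ((u ^ (m + 1) : Aˣ) : A) =
      ((u ^ m : Aˣ) : A) • d (u : A) + (u : A) • d ((u ^ m : Aˣ) : A) := by
    rw [zpow_add_one, Units.val_mul, d.leibniz]
  have shift (m : ℤ) : (u : A) * ((u ^ (m - 1) : Aˣ) : A) = ((u ^ m : Aˣ) : A) := by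
    rw [← Units.val_mul, mul_self_zpow, sub_add_cancel]
  induction n using Int.induction_on with
  | zero => simp
  | succ k ih =>
    rw [succ, ih, smul_comm (u : A), smul_smul (u : A), shift, add_sub_cancel_right, add_smul,
      one_smul, add_comm]
  | pred k ih =>
    have h := succ (-(k : ℤ) - 1)
    rw [sub_add_cancel, ih] at h
    apply u.isUnit.smul_left_cancel.mp
    rw [smul_comm (u : A), smul_smul (u : A), shift, sub_smul, one_smul, h, add_sub_cancel_left]

/-- Let `K` be a field, `r ≥ 1`, `f ∈ K[X]`, `R₀ = K[x,y]/(y^r − f(x))` (presented by a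
surjection `π` from `K[x][y]` with kernel generated by `y^r − f(x)`; here `y` is the outer
variable `X` and `x` is `C X`), and let `A` be the localization of `R₀` away from the image
of `y`, so that `y` is invertible in `A` (its powers given by a unit `u`). Then in the module
of Kähler differentials `Ω[A⁄K]` with universal derivation `D`, for all integers `i ≥ 1`
and `j`,
`(j − r) • (x^i·f'(x)·y^{−j} • D(x)) = (r·i) • (x^{i−1}·y^{r−j} • D(x)) − r • D(x^i·y^{r−j})`
(the reduction formula Red1). -/
theorem stmt_7 (K R₀ A : Type*) [Field K] [CommRing R₀] [Algebra K R₀]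
    [CommRing A] [Algebra R₀ A] [Algebra K A] [IsScalarTower K R₀ A]
    (r : ℕ) (hr : 1 ≤ r) (f : Polynomial K)
    (π : Polynomial (Polynomial K) →ₐ[K] R₀) (hπ : Function.Surjective π)
    (hker : RingHom.ker (π : Polynomial (Polynomial K) →+* R₀) =
      Ideal.span {(X : Polynomial (Polynomial K)) ^ r - C f})
    [IsLocalization.Away (π (X : Polynomial (Polynomial K))) A]
    (u : Aˣ) (hu : (u : A) = algebraMap R₀ A (π (X : Polynomial (Polynomial K)))) :
    ∀ (i : ℕ), 1 ≤ i → ∀ (j : ℤ),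
      (j - (r : ℤ)) • ((algebraMap R₀ A (π (C (X : Polynomial K))) ^ i *
            algebraMap R₀ A (π (C (derivative f))) * ((u ^ (-j) : Aˣ) : A)) •
          KaehlerDifferential.D K A (algebraMap R₀ A (π (C (X : Polynomial K))))) =
        ((r : ℤ) * (i : ℤ)) • ((algebraMap R₀ A (π (C (X : Polynomial K))) ^ (i - 1) *
              ((u ^ ((r : ℤ) - j) : Aˣ) : A)) •
            KaehlerDifferential.D K A (algebraMap R₀ A (π (C (X : Polynomial K)))))
          - (r : ℤ) • KaehlerDifferential.D K A
              (algebraMap R₀ A (π (C (X : Polynomial K))) ^ i *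
                ((u ^ ((r : ℤ) - j) : Aˣ) : A)) := by
  intro i hi j
  set x : A := algebraMap R₀ A (π (C (X : Polynomial K))) with hx
  have aeval_x (p : Polynomial K) : algebraMap R₀ A (π (C p)) = aeval x p :=
    DFunLike.congr_fun (Polynomial.algHom_ext (by simp [hx]) :
      ((IsScalarTower.toAlgHom K R₀ A).comp π).comp CAlgHom = aeval x) p
  have curve : ((u ^ (r : ℤ) : Aˣ) : A) = aeval x f := by
    have h : (X : Polynomial (Polynomial K)) ^ r - C f ∈
        RingHom.ker (π : Polynomial (Polynomial K) →+* R₀) :=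
      hker ▸ Ideal.mem_span_singleton_self _
    have h' : π X ^ r = π (C f) := by
      simpa [RingHom.mem_ker, sub_eq_zero] using h
    rw [← aeval_x, ← h', map_pow, ← hu, zpow_natCast, Units.val_pow_eq_pow_val]
  have dcurve := congrArg (KaehlerDifferential.D K A) curve
  rw [Derivation.leibniz_units_zpow, Derivation.map_aeval] at dcurve
  have key := congrArg (((u ^ (-j) : Aˣ) : A) • ·) dcurve
  rw [smul_comm, smul_smul, ← Units.val_mul, ← zpow_add,
    show -j + ((r : ℤ) - 1) = r - j - 1 by ring, smul_smul] at key
  rw [aeval_x, Derivation.leibniz, Derivation.leibniz_units_zpow, Derivation.leibniz_pow,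
    mul_assoc, mul_comm (aeval x (derivative f)), mul_smul, ← key]
  module
end

section
/- Let K be a field, r ≥ 1 an integer, and f ∈ K[X] a polynomial. Let R₀ = K[x, y]/(y^r − f(x)) and let A be the localization of R₀ away from the image of y, so that y is invertible in A. Let Ω_{A/K} be the module of Kähler differentials of A over K with universal derivation D. Then for all integers i ≥ 1 and j, the identity (r·i·x^{i−1}·f(x) + (r − j)·x^i·f'(x)) · y^{−j} • D(x) = D(r · x^i · y^{r−j}) holds in Ω_{A/K}. In particular, for 1 ≤ j ≤ r, the element (r i x^{i−1} f(x) + (r−j) x^i f'(x)) y^{−j} D(x) is an exact differential. -/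
open Polynomial

/-- The power rule for a derivation at an integer power of a unit. -/
theorem Derivation.map_units_zpow {R A M : Type*} [CommRing R] [CommRing A] [Algebra R A]
    [AddCommGroup M] [Module A M] [Module R M] (d : Derivation R A M) (u : Aˣ) (n : ℤ) :
    d ((u ^ n : Aˣ) : A) = ((n : A) * ((u ^ (n - 1) : Aˣ) : A)) • d (u : A) := by
  have step (m : ℤ) : d ((u ^ (m + 1) : Aˣ) : A) =
      ((u ^ m : Aˣ) : A) • d (u : A) + (u : A) • d ((u ^ m : Aˣ) : A) := by
    rw [zpow_add_one, Units.val_mul, d.leibniz]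
  have hmul (m : ℤ) : (u : A) * ((u ^ (m - 1) : Aˣ) : A) = ((u ^ m : Aˣ) : A) := by
    rw [← Units.val_mul, mul_self_zpow, sub_add_cancel]
  induction n using Int.induction_on with
  | zero => simp
  | succ k ih =>
    rw [step, ih, smul_smul, ← add_smul, mul_left_comm, hmul, add_sub_cancel_right]
    push_cast
    congr 1
    ring
  | pred k ih =>
    have h := step (-(k : ℤ) - 1)
    rw [sub_add_cancel, ih] at h
    have hu : (u : A) • d ((u ^ (-(k : ℤ) - 1) : Aˣ) : A) =
        (u : A) • (((-(k : ℤ) - 1 : ℤ) : A) * ((u ^ (-(k : ℤ) - 1 - 1) : Aˣ) : A)) •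
          d (u : A) := by
      rw [smul_smul, mul_left_comm, hmul, ← sub_eq_of_eq_add' h, ← sub_smul]
      push_cast
      congr 1
      ring
    exact u.isUnit.smul_left_cancel.mp hu

/-- The reduction formula for an arbitrary derivation and a unit `u` with `u ^ r = f(x)`. -/
theorem Derivation.reduction_of_pow_eq_aeval {R A M : Type*} [CommRing R] [CommRing A]
    [Algebra R A] [AddCommGroup M] [Module A M] [Module R M] [IsScalarTower R A M]
    (d : Derivation R A M) (x : A) (u : Aˣ) (f : R[X]) (r : ℕ)
    (h : (u : A) ^ r = aeval x f) (i : ℕ) (j : ℤ) :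
    (((r : A) * (i : A) * x ^ (i - 1) * aeval x f
        + ((r : A) - (j : A)) * x ^ i * aeval x (derivative f)) * ((u ^ (-j) : Aˣ) : A)) • d x =
      d ((r : A) * x ^ i * ((u ^ ((r : ℤ) - j) : Aˣ) : A)) := by
  have hpow : ((u ^ ((r : ℤ) - j) : Aˣ) : A) = aeval x f * ((u ^ (-j) : Aˣ) : A) := by
    rw [sub_eq_add_neg, zpow_add, Units.val_mul, zpow_natCast, Units.val_pow_eq_pow_val, h]
  have hsplit : ((u ^ ((r : ℤ) - j - 1) : Aˣ) : A) =
      ((u ^ (-j) : Aˣ) : A) * ((u ^ ((r : ℤ) - 1) : Aˣ) : A) := by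
    rw [← Units.val_mul, ← zpow_add]
    congr 2
    ring
  have hdiff : ((r : A) * ((u ^ ((r : ℤ) - 1) : Aˣ) : A)) • d (u : A) =
      aeval x (derivative f) • d x := by
    have := d.map_units_zpow u r
    rw [zpow_natCast, Units.val_pow_eq_pow_val, h, d.map_aeval, Int.cast_natCast] at this
    exact this.symm
  have hfactor : (r : A) * x ^ i * (((r : ℤ) - j : ℤ) * ((u ^ ((r : ℤ) - j - 1) : Aˣ) : A)) =
      ((r : A) - j) * x ^ i * ((u ^ (-j) : Aˣ) : A) *
        ((r : A) * ((u ^ ((r : ℤ) - 1) : Aˣ) : A)) := by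
    rw [hsplit]
    push_cast
    ring
  rw [d.leibniz, d.map_units_zpow, smul_smul, hfactor, mul_smul _ _ (d (u : A)), hdiff, hpow,
    d.leibniz, d.map_natCast, d.leibniz_pow]
  simp only [← Nat.cast_smul_eq_nsmul A, smul_smul, smul_zero, add_zero, ← add_smul]
  congr 1
  ring

/-- Let `K` be a field, `r ≥ 1`, `f ∈ K[X]`, `R₀ = K[x,y]/(y^r − f(x))` (presented by a
surjection `π` from `K[x][y]` with kernel generated by `y^r − f(x)`; here `y` is the outer
variable `X` and `x` is `C X`), and let `A` be the localization of `R₀` away from the image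
of `y`, so that `y` is invertible in `A` (its powers given by a unit `u`). Then in the module
of Kähler differentials `Ω[A⁄K]` with universal derivation `D`, for all integers `i ≥ 1`
and `j`,
`(r·i·x^{i−1}·f(x) + (r − j)·x^i·f'(x)) · y^{−j} • D(x) = D(r·x^i·y^{r−j})`
(the reduction formula Red2); in particular the left-hand side is an exact differential. -/
theorem stmt_8 (K R₀ A : Type*) [Field K] [CommRing R₀] [Algebra K R₀]
    [CommRing A] [Algebra R₀ A] [Algebra K A] [IsScalarTower K R₀ A]
    (r : ℕ) (hr : 1 ≤ r) (f : Polynomial K)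
    (π : Polynomial (Polynomial K) →ₐ[K] R₀) (hπ : Function.Surjective π)
    (hker : RingHom.ker (π : Polynomial (Polynomial K) →+* R₀) =
      Ideal.span {(X : Polynomial (Polynomial K)) ^ r - C f})
    [IsLocalization.Away (π (X : Polynomial (Polynomial K))) A]
    (u : Aˣ) (hu : (u : A) = algebraMap R₀ A (π (X : Polynomial (Polynomial K)))) :
    ∀ (i : ℕ), 1 ≤ i → ∀ (j : ℤ),
      ((((r : A) * (i : A) * algebraMap R₀ A (π (C (X : Polynomial K))) ^ (i - 1) *
              algebraMap R₀ A (π (C f))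
            + ((r : A) - (j : A)) * algebraMap R₀ A (π (C (X : Polynomial K))) ^ i *
              algebraMap R₀ A (π (C (derivative f)))) * ((u ^ (-j) : Aˣ) : A)) •
          KaehlerDifferential.D K A (algebraMap R₀ A (π (C (X : Polynomial K))))) =
        KaehlerDifferential.D K A ((r : A) *
          algebraMap R₀ A (π (C (X : Polynomial K))) ^ i * ((u ^ ((r : ℤ) - j) : Aˣ) : A)) := by
  intro i _ j
  have hC (g : K[X]) : algebraMap R₀ A (π (C g)) = aeval (algebraMap R₀ A (π (C X))) g := by
    let φ : K[X] →ₐ[K] A := (IsScalarTower.toAlgHom K R₀ A).comp (π.comp (CAlgHom (R := K)))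
    exact (aeval_algHom_apply φ X g).symm ▸ by simp [φ]
  have hrel : π (X ^ r) = π (C f) := by
    have hmem : (X : K[X][X]) ^ r - C f ∈ RingHom.ker (π : K[X][X] →+* R₀) :=
      hker ▸ Ideal.mem_span_singleton_self _
    exact sub_eq_zero.mp ((map_sub π _ _).symm.trans hmem)
  have hpow : (u : A) ^ r = aeval (algebraMap R₀ A (π (C X))) f := by
    rw [hu, ← map_pow, ← map_pow, hrel, hC]
  rw [hC f, hC (derivative f)]
  exact (KaehlerDifferential.D K A).reduction_of_pow_eq_aeval _ u f r hpow i j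
end

section
/- Let K be a field and let f ∈ K[X] be a polynomial of degree d ≥ 1 such that f and its formal derivative f' are coprime (IsCoprime f f'). Then for every polynomial R ∈ K[X] of degree at most 2d − 2, there exist unique polynomials A, B ∈ K[X] with deg A ≤ d − 2 and deg B ≤ d − 1 such that R = A·f + B·f'. -/
/-- Let `K` be a field and `f ∈ K[X]` of degree `d ≥ 1` with `f` and `f'` coprime. Then every
polynomial `R` of degree at most `2d − 2` has a unique decomposition `R = A·f + B·f'` with
`deg A ≤ d − 2` (i.e. `deg A < d − 1`) and `deg B ≤ d − 1` (i.e. `deg B < d`). -/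
theorem stmt_9 (K : Type*) [Field K] (f : Polynomial K) (d : ℕ) (hd : 1 ≤ d)
    (hdeg : f.natDegree = d) (hcop : IsCoprime f (Polynomial.derivative f)) :
    ∀ R : Polynomial K, R.degree ≤ (2 * d - 2 : ℕ) →
      ∃! AB : Polynomial K × Polynomial K,
        AB.1.degree < (d - 1 : ℕ) ∧ AB.2.degree < (d : ℕ) ∧
          R = AB.1 * f + AB.2 * Polynomial.derivative f := by
  have hf : f ≠ 0 := by
    rintro rfl
    simp at hdeg
    omega
  have hfd : f.degree = (d : ℕ) := by rw [Polynomial.degree_eq_natDegree hf, hdeg]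
  intro R hR
  obtain ⟨u, v, huv⟩ := hcop
  have hBdeg : (R * v % f).degree < (d : ℕ) := hfd ▸ Polynomial.degree_mod_lt _ hf
  have hdecomp : R = (R * u + R * v / f * Polynomial.derivative f) * f
      + R * v % f * Polynomial.derivative f := by
    linear_combination (-R) * huv - Polynomial.derivative f * EuclideanDomain.div_add_mod (R * v) f
  refine ⟨(R * u + R * v / f * Polynomial.derivative f, R * v % f), ⟨?_, hBdeg, hdecomp⟩, ?_⟩
  · dsimp only
    generalize R * u + R * v / f * Polynomial.derivative f = A at hdecomp ⊢
    generalize R * v % f = B at hdecomp hBdeg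
    by_contra! hA
    have hA0 : A ≠ 0 := by
      rintro rfl
      simp at hA
    have hAf : A * f = R - B * Polynomial.derivative f := by linear_combination -hdecomp
    have hprod : (A * f).natDegree = A.natDegree + d := by
      rw [Polynomial.natDegree_mul hA0 hf, hdeg]
    have hAnat : d - 1 ≤ A.natDegree := Polynomial.le_natDegree_of_coe_le_degree hA
    have hRnat : R.natDegree ≤ 2 * d - 2 := Polynomial.natDegree_le_of_degree_le hR
    have hBnat : B.natDegree ≤ d - 1 := by
      rcases eq_or_ne B 0 with rfl | hB0
      · simp
      · exact Nat.le_sub_one_of_lt ((Polynomial.natDegree_lt_iff_degree_lt hB0).mpr hBdeg)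
    have hderiv := Polynomial.natDegree_derivative_le f
    have hmul := Polynomial.natDegree_mul_le (p := B) (q := Polynomial.derivative f)
    have hsub := Polynomial.natDegree_sub_le R (B * Polynomial.derivative f)
    rw [← hAf] at hsub
    omega
  · rintro ⟨A, B⟩ ⟨-, hB, hAB⟩
    dsimp only at hB hAB
    have hdvd : f ∣ B - R * v % f := by
      refine IsCoprime.dvd_of_dvd_mul_right ⟨u, v, huv⟩
        ⟨R * u + R * v / f * Polynomial.derivative f - A, ?_⟩
      linear_combination hdecomp - hAB
    have hBeq : B = R * v % f := by
      refine sub_eq_zero.mp (Polynomial.eq_zero_of_dvd_of_degree_lt hdvd ?_)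
      rw [hfd]
      exact (Polynomial.degree_sub_le _ _).trans_lt (max_lt hB hBdeg)
    refine Prod.ext (mul_right_cancel₀ hf ?_) hBeq
    dsimp only
    linear_combination hdecomp - hAB - Polynomial.derivative f * hBeq
end

section
/- Let K be a field of characteristic zero, let f ∈ K[X] be monic of degree d ≥ 1, and let r and j be positive integers such that r divides j·d. Then there exists a unique monic polynomial B ∈ K[X] of degree j·d/r such that the polynomial j·B·f' − r·B'·f has degree at most d − 2 (where f' and B' denote formal derivatives). -/
open Polynomial in
/-- The twisted derivation `p ↦ j·p·f' − r·p'·f`, as a linear map. -/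
noncomputable def twistedDerivation {K : Type*} [Field K] (f : K[X]) (r j : ℕ) : K[X] →ₗ[K] K[X] :=
  (LinearMap.mulRight K (derivative f)) ∘ₗ ((j : K) • LinearMap.id)
    - (LinearMap.mulRight K f) ∘ₗ ((r : K) • derivative)

open Polynomial in
theorem twistedDerivation_apply {K : Type*} [Field K] (f : K[X]) (r j : ℕ) (p : K[X]) :
    twistedDerivation f r j p = (j : K[X]) * p * derivative f - (r : K[X]) * derivative p * f := by
  simp [twistedDerivation, smul_eq_C_mul]

open Polynomial in
theorem natDegree_twistedDerivation_le {K : Type*} [Field K] {f : K[X]} {e : ℕ}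
    (hdeg : f.natDegree = e + 1) (r j : ℕ) {p : K[X]} {m : ℕ} (hp : p.natDegree ≤ m) :
    (twistedDerivation f r j p).natDegree ≤ m + e := by
  have hf' : (derivative f).natDegree ≤ e := by
    have := natDegree_derivative_le f
    omega
  have hleft : (p * derivative f).natDegree ≤ m + e := natDegree_mul_le_of_le hp hf'
  have hright : (derivative p * f).natDegree ≤ m + e := by
    rcases m with _ | m
    · rw [eq_C_of_natDegree_le_zero hp]
      simp
    · have hp' : (derivative p).natDegree ≤ m := by
        have := natDegree_derivative_le p
        omega
      have := natDegree_mul_le_of_le hp' hdeg.le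
      omega
  rw [twistedDerivation_apply, mul_assoc, mul_assoc, ← C_eq_natCast, ← C_eq_natCast]
  exact natDegree_sub_le_of_le ((natDegree_C_mul_le _ _).trans hleft)
    ((natDegree_C_mul_le _ _).trans hright) |>.trans (max_self _).le

open Polynomial in
theorem coeff_twistedDerivation {K : Type*} [Field K] {f : K[X]} {e : ℕ} (hf : f.Monic)
    (hdeg : f.natDegree = e + 1) (r j : ℕ) {p : K[X]} {m : ℕ} (hp : p.natDegree ≤ m) :
    (twistedDerivation f r j p).coeff (m + e) = p.coeff m * (j * (e + 1) - r * m) := by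
  have hlead : f.coeff (e + 1) = 1 := hdeg ▸ hf.coeff_natDegree
  have hf' : (derivative f).natDegree ≤ e := by
    have := natDegree_derivative_le f
    omega
  have hleft : (p * derivative f).coeff (m + e) = p.coeff m * (e + 1) := by
    rw [coeff_mul_add_eq_of_natDegree_le hp hf', coeff_derivative, hlead, one_mul]
  have hright : (derivative p * f).coeff (m + e) = p.coeff m * m := by
    rcases m with _ | m
    · rw [eq_C_of_natDegree_le_zero hp]
      simp
    · have hp' : (derivative p).natDegree ≤ m := by
        have := natDegree_derivative_le p
        omega
      rw [show m + 1 + e = m + (e + 1) by ring, coeff_mul_add_eq_of_natDegree_le hp' hdeg.le,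
        coeff_derivative, hlead, mul_one]
      push_cast
      rfl
  rw [twistedDerivation_apply, mul_assoc, mul_assoc, ← C_eq_natCast, ← C_eq_natCast, coeff_sub,
    coeff_C_mul, coeff_C_mul, hleft, hright]
  ring

open Polynomial in
theorem exists_monic_degree_twistedDerivation_lt {K : Type*} [Field K] [CharZero K] {f : K[X]}
    {e : ℕ} (hf : f.Monic) (hdeg : f.natDegree = e + 1) {r j b : ℕ} (hr : 0 < r)
    (hb : r * b = j * (e + 1)) {m : ℕ} (hm : m ≤ b) :
    ∃ B : K[X], B.Monic ∧ B.natDegree = b ∧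
      (twistedDerivation f r j B).degree < (m + e : ℕ) := by
  have hbK : (j : K) * (e + 1) = r * b := mod_cast hb.symm
  have hrK : (r : K) ≠ 0 := mod_cast hr.ne'
  induction hm using Nat.decreasingInduction with
  | self =>
    have hX : (X ^ b : K[X]).natDegree ≤ b := natDegree_X_pow_le b
    refine ⟨X ^ b, monic_X_pow b, natDegree_X_pow b, ?_⟩
    rw [degree_lt_iff_coeff_zero]
    intro k hk
    rcases hk.eq_or_lt with rfl | hk
    · rw [coeff_twistedDerivation hf hdeg r j hX, hbK, sub_self, mul_zero]
    · exact coeff_eq_zero_of_natDegree_lt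
        ((natDegree_twistedDerivation_le hdeg r j hX).trans_lt hk)
  | of_succ m hm ih =>
    obtain ⟨B, hB, hBdeg, hlt⟩ := ih
    have hne : (j : K) * (e + 1) - r * m ≠ 0 := by
      rw [hbK, ← mul_sub]
      exact mul_ne_zero hrK (sub_ne_zero.mpr (mod_cast hm.ne'))
    set c : K := (twistedDerivation f r j B).coeff (m + e) / (j * (e + 1) - r * m) with hc
    have hmon : (C c * X ^ m).natDegree ≤ m := natDegree_C_mul_X_pow_le c m
    have hmon_lt : (C c * X ^ m).degree < B.degree := by
      rw [degree_eq_natDegree hB.ne_zero, hBdeg]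
      exact (degree_C_mul_X_pow_le m c).trans_lt (mod_cast hm)
    refine ⟨B - C c * X ^ m, hB.sub_of_left hmon_lt, ?_, ?_⟩
    · rw [natDegree_sub_eq_left_of_natDegree_lt (by omega), hBdeg]
    rw [degree_lt_iff_coeff_zero] at hlt ⊢
    intro k hk
    rw [map_sub, coeff_sub]
    rcases hk.eq_or_lt with rfl | hk
    · rw [coeff_twistedDerivation hf hdeg r j hmon, coeff_C_mul_X_pow, if_pos rfl, hc,
        div_mul_cancel₀ _ hne, sub_self]
    · rw [hlt k (by omega), coeff_eq_zero_of_natDegree_lt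
        ((natDegree_twistedDerivation_le hdeg r j hmon).trans_lt hk), sub_self]

open Polynomial in
theorem eq_zero_of_degree_twistedDerivation_lt {K : Type*} [Field K] [CharZero K] {f : K[X]}
    {e : ℕ} (hf : f.Monic) (hdeg : f.natDegree = e + 1) {r j b : ℕ} (hr : 0 < r)
    (hb : r * b = j * (e + 1)) {p : K[X]} (hp : p.degree < b)
    (hlt : (twistedDerivation f r j p).degree < e) : p = 0 := by
  by_contra hne
  have hbK : (j : K) * (e + 1) = r * b := mod_cast hb.symm
  have hrK : (r : K) ≠ 0 := mod_cast hr.ne'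
  have hpb : p.natDegree < b := (natDegree_lt_iff_degree_lt hne).mpr hp
  have hcoeff := coeff_twistedDerivation hf hdeg r j (le_refl p.natDegree)
  rw [degree_lt_iff_coeff_zero] at hlt
  rw [hlt _ (by omega), hbK, ← mul_sub] at hcoeff
  exact mul_ne_zero (leadingCoeff_ne_zero.mpr hne)
    (mul_ne_zero hrK (sub_ne_zero.mpr (mod_cast hpb.ne'))) hcoeff.symm


/-- Let `K` be a field of characteristic zero, `f ∈ K[X]` monic of degree `d ≥ 1`, and `r, j`
positive integers with `r ∣ j·d`. Then there is a unique monic polynomial `B` of degree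
`j·d/r` such that `j·B·f' − r·B'·f` has degree at most `d − 2` (i.e. degree `< d − 1`). -/
theorem stmt_10 (K : Type*) [Field K] [CharZero K] (f : Polynomial K) (d : ℕ) (hd : 1 ≤ d)
    (hf : f.Monic) (hdeg : f.natDegree = d) (r j : ℕ) (hr : 0 < r) (hj : 0 < j)
    (hdvd : r ∣ j * d) :
    ∃! B : Polynomial K, B.Monic ∧ B.natDegree = j * d / r ∧
      ((j : Polynomial K) * B * Polynomial.derivative f
          - (r : Polynomial K) * Polynomial.derivative B * f).degree < (d - 1 : ℕ) := by
  obtain ⟨e, rfl⟩ : ∃ e, d = e + 1 := ⟨d - 1, by omega⟩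
  have hb : r * (j * (e + 1) / r) = j * (e + 1) := Nat.mul_div_cancel' hdvd
  simp only [← twistedDerivation_apply, Nat.add_sub_cancel]
  obtain ⟨B, hB, hBdeg, hlt⟩ :=
    exists_monic_degree_twistedDerivation_lt hf hdeg hr hb (Nat.zero_le _)
  rw [zero_add] at hlt
  refine ⟨B, ⟨hB, hBdeg, hlt⟩, ?_⟩
  rintro A ⟨hA, hAdeg, hAlt⟩
  have hdegA : A.degree = (j * (e + 1) / r : ℕ) := by
    rw [Polynomial.degree_eq_natDegree hA.ne_zero, hAdeg]
  have hdegB : B.degree = (j * (e + 1) / r : ℕ) := by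
    rw [Polynomial.degree_eq_natDegree hB.ne_zero, hBdeg]
  refine sub_eq_zero.mp (eq_zero_of_degree_twistedDerivation_lt hf hdeg hr hb ?_ ?_)
  · rw [← hdegA]
    exact Polynomial.degree_sub_lt_left (hdegA.trans hdegB.symm) hA.ne_zero (hA.trans hB.symm)
  · rw [map_sub]
    exact (Polynomial.degree_sub_le _ _).trans_lt (max_lt hAlt hlt)
end

section
/- Let q, δ, e be positive integers with gcd(q, δ) = 1. For each positive divisor i of δ, let k_i denote the multiplicative order of q modulo i. Let V ∈ ℂ[t] be the polynomial V(t) = ∏_{i ∣ δ, i > 1} (t^{k_i} − 1)^{φ(i)/k_i}, where the product is over the positive divisors i of δ with i > 1 and φ is Euler's totient function (note k_i divides φ(i), so the exponents are integers). Then the sum of the e-th powers of the roots of V in ℂ, counted with multiplicity, equals gcd(δ, q^e − 1) − 1. -/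
open Polynomial in
/-- The `e`-th power sum of the `k`-th roots of unity in `ℂ` is `k` if `k ∣ e` and `0` otherwise. -/
theorem sum_map_pow_roots_X_pow_sub_one {k : ℕ} (hk : k ≠ 0) (e : ℕ) :
    (((X ^ k - 1 : ℂ[X]).roots).map (fun z => z ^ e)).sum = if k ∣ e then (k : ℂ) else 0 := by
  have hζ := Complex.isPrimitiveRoot_exp k hk
  set ζ : ℂ := Complex.exp (2 * Real.pi * Complex.I / k)
  have hroots : (X ^ k - 1 : ℂ[X]).roots = (Multiset.range k).map (ζ ^ ·) := by
    simpa [nthRoots] using hζ.nthRoots_eq (one_pow k)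
  have hsum : (((X ^ k - 1 : ℂ[X]).roots).map (fun z => z ^ e)).sum =
      ∑ j ∈ Finset.range k, (ζ ^ e) ^ j := by
    rw [hroots, Multiset.map_map]
    change ∑ j ∈ Finset.range k, (ζ ^ j) ^ e = _
    exact Finset.sum_congr rfl fun j _ => pow_right_comm ζ j e
  rw [hsum]
  split_ifs with h
  · simp [(hζ.pow_eq_one_iff_dvd e).2 h]
  · have hne : ζ ^ e ≠ 1 := fun h1 => h ((hζ.pow_eq_one_iff_dvd e).1 h1)
    rw [geom_sum_eq hne, pow_right_comm, hζ.pow_eq_one]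
    simp

theorem ZMod.orderOf_natCast_pos_and_dvd_totient {q i : ℕ} (hi : 0 < i) (h : q.Coprime i) :
    0 < orderOf (q : ZMod i) ∧ orderOf (q : ZMod i) ∣ i.totient := by
  have : NeZero i := ⟨hi.ne'⟩
  rw [← ZMod.coe_unitOfCoprime q h, orderOf_units, ← ZMod.card_units_eq_totient]
  exact ⟨orderOf_pos _, orderOf_dvd_card⟩

theorem ZMod.orderOf_natCast_dvd_iff {q : ℕ} (hq : 0 < q) (i e : ℕ) :
    orderOf (q : ZMod i) ∣ e ↔ i ∣ q ^ e - 1 := by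
  rw [orderOf_dvd_iff_pow_eq_one, ← ZMod.natCast_eq_zero_iff,
    Nat.cast_sub (Nat.one_le_pow _ _ hq), sub_eq_zero]
  simp

theorem Nat.sum_totient_divisors_filter_dvd {δ : ℕ} (hδ : 0 < δ) (N : ℕ) :
    ∑ i ∈ δ.divisors.filter (fun i => 1 < i), (if i ∣ N then i.totient else 0) + 1 =
      δ.gcd N := by
  have hg : δ.gcd N ≠ 0 := (Nat.gcd_pos_of_pos_left N hδ).ne'
  have hset : (δ.divisors.filter (fun i => 1 < i)).filter (· ∣ N) = (δ.gcd N).divisors.erase 1 := by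
    ext i
    have : i ∣ δ → 0 < i := fun h => Nat.pos_of_dvd_of_pos h hδ
    simp only [Finset.mem_filter, Nat.mem_divisors, Finset.mem_erase, Nat.dvd_gcd_iff]
    grind
  rw [← Finset.sum_filter, hset]
  conv_rhs => rw [← Nat.sum_totient (δ.gcd N)]
  rw [← Finset.sum_erase_add _ _ (Nat.one_mem_divisors.2 hg), Nat.totient_one]

/-- Let `q, δ, e` be positive integers with `gcd(q, δ) = 1`, and for each divisor `i` of `δ`
let `k_i = orderOf (q : ZMod i)` be the multiplicative order of `q` modulo `i`. Let
`V(t) = ∏_{i ∣ δ, i > 1} (t^{k_i} − 1)^{φ(i)/k_i}` in `ℂ[t]`. Then the sum of the `e`-th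
powers of the roots of `V` in `ℂ`, counted with multiplicity, equals `gcd(δ, q^e − 1) − 1`. -/
theorem stmt_12 (q δ e : ℕ) (hq : 0 < q) (hδ : 0 < δ) (he : 0 < e)
    (hcop : Nat.Coprime q δ) (V : Polynomial ℂ)
    (hV : V = ∏ i ∈ δ.divisors.filter (fun i => 1 < i),
      (Polynomial.X ^ orderOf ((q : ZMod i)) - 1) ^ (Nat.totient i / orderOf ((q : ZMod i)))) :
    (V.roots.map (fun z => z ^ e)).sum = (Nat.gcd δ (q ^ e - 1) : ℂ) - 1 := by
  have horder (i : ℕ) (hi : i ∈ δ.divisors.filter (fun i => 1 < i)) :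
      0 < orderOf (q : ZMod i) ∧ orderOf (q : ZMod i) ∣ i.totient := by
    simp only [Finset.mem_filter, Nat.mem_divisors] at hi
    exact ZMod.orderOf_natCast_pos_and_dvd_totient (by lia) (hcop.coprime_dvd_right hi.1.1)
  have hne : ∏ i ∈ δ.divisors.filter (fun i => 1 < i),
      (Polynomial.X ^ orderOf ((q : ZMod i)) - 1 : Polynomial ℂ) ^
        (Nat.totient i / orderOf ((q : ZMod i))) ≠ 0 :=
    Finset.prod_ne_zero_iff.2 fun i hi =>
      pow_ne_zero _ (Polynomial.X_pow_sub_C_ne_zero (horder i hi).1 1)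
  rw [hV, Polynomial.roots_prod _ _ hne, Multiset.map_bind, Multiset.sum_bind,
    ← Nat.sum_totient_divisors_filter_dvd hδ (q ^ e - 1)]
  push_cast
  rw [add_sub_cancel_right]
  refine Finset.sum_congr rfl fun i hi => ?_
  obtain ⟨hpos, hdvd⟩ := horder i hi
  rw [Polynomial.roots_pow, Multiset.map_nsmul, Multiset.sum_nsmul,
    sum_map_pow_roots_X_pow_sub_one hpos.ne']
  simp only [ZMod.orderOf_natCast_dvd_iff hq]
  split_ifs
  · rw [nsmul_eq_mul, ← Nat.cast_mul, Nat.div_mul_cancel hdvd]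
  · simp
end

section
/- Let p be a prime and let r, k, j be natural numbers with r ≥ 1 and 1 ≤ j ≤ r. Then Nat.log p (k·r + j) ≤ k + Nat.log p r, where Nat.log p n denotes the floor of the base-p logarithm of n. -/
/-- Let `p` be a prime and let `r, k, j` be natural numbers with `r ≥ 1` and `1 ≤ j ≤ r`.
Then `Nat.log p (k·r + j) ≤ k + Nat.log p r`. -/
theorem stmt_13 (p : ℕ) (hp : p.Prime) (r k j : ℕ) (hr : 1 ≤ r)
    (hj1 : 1 ≤ j) (hjr : j ≤ r) :
    Nat.log p (k * r + j) ≤ k + Nat.log p r := by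
  have hk : k + 1 ≤ p ^ k := Nat.lt_pow_self hp.one_lt
  refine Nat.lt_succ_iff.mp (Nat.log_lt_of_lt_pow (by omega) ?_)
  calc k * r + j ≤ (k + 1) * r := by linarith
    _ ≤ p ^ k * r := Nat.mul_le_mul_right r hk
    _ < p ^ k * p ^ (Nat.log p r + 1) :=
      Nat.mul_lt_mul_of_pos_left (Nat.lt_pow_succ_log_self hp.one_lt r) (pow_pos hp.pos k)
    _ = p ^ (k + Nat.log p r + 1) := by rw [← pow_add, add_assoc]
end
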